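/- arXiv:2503.06017 — 6 statements merged into one kernel-verified Lean document; each statement's English description precedes it below -/
import Mathlib

section
/- Let (N, v) be an additively separable hedonic game with TV(N,v) ≥ 0, let c ≥ 1 be a real number, let π* be a partition of N maximizing the correlation welfare CW over all partitions, and let π be a partition with c·CW(π) ≥ CW(π*). Then c·SW(π) ≥ SW(π*). -/
/-- A partition of a finite set of agents, represented by the function
assigning to each agent the coalition (finset) containing it. -/
structure AgentPartition (α : Type*) [DecidableEq α] [Fintype α] where
  part : α → Finset α
  mem_part : ∀ i, i ∈ part i
  part_eq_of_mem : ∀ i j, j ∈ part i → part j = part i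

variable {α : Type*} [DecidableEq α] [Fintype α]

/-- Social welfare of a partition in the ASHG with valuations `v`. -/
noncomputable def SW (v : α → α → ℝ) (π : AgentPartition α) : ℝ :=
  ∑ i, ∑ j ∈ π.part i, v i j

/-- Correlation welfare of a partition in the ASHG with valuations `v`. -/
noncomputable def CW (v : α → α → ℝ) (π : AgentPartition α) : ℝ :=
  (1 / 2) * ∑ i, ((∑ j ∈ π.part i, v i j) - ∑ j ∈ (π.part i)ᶜ, v i j)

/-- Total value of the ASHG with valuations `v`. -/
noncomputable def TV (α : Type*) [Fintype α] (v : α → α → ℝ) : ℝ :=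
  ∑ i, ∑ j, v i j

theorem CW_eq_SW_sub (v : α → α → ℝ) (π : AgentPartition α) :
    CW v π = SW v π - TV α v / 2 := by
  have h : TV α v = SW v π + ∑ i, ∑ j ∈ (π.part i)ᶜ, v i j := by
    unfold TV SW
    rw [← Finset.sum_add_distrib]
    exact Finset.sum_congr rfl fun i _ => (Finset.sum_add_sum_compl _ _).symm
  rw [h]
  unfold CW SW
  rw [Finset.sum_sub_distrib]
  ring

theorem sw_approx_of_cw_approx (v : α → α → ℝ) (hv : ∀ i, v i i = 0)
    (hTV : 0 ≤ TV α v) (c : ℝ) (hc : 1 ≤ c) (πstar π : AgentPartition α)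
    (hmax : ∀ π' : AgentPartition α, CW v π' ≤ CW v πstar)
    (happrox : CW v πstar ≤ c * CW v π) :
    SW v πstar ≤ c * SW v π := by
  rw [CW_eq_SW_sub, CW_eq_SW_sub] at happrox
  nlinarith [mul_nonneg (sub_nonneg.2 hc) hTV]
end

section
/- Let (N, v) be an additively separable hedonic game with |N| ≥ 2 and let π be any partition of N. Then there exists a partition π₂ of N consisting of at most two coalitions such that 2·SW(π₂) ≥ SW(π) + TV(N,v). (Equivalently, merging the coalitions of π into two groups uniformly at random yields expected social welfare SW(π) + (1/2)·A(π), where A(π) = Σ_{i∈N} Σ_{j∉π(i)} v_i(j) is the total cross-coalition value of π.) -/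
variable {α : Type*} [DecidableEq α] [Fintype α]

/-- The coalitions (parts) of a partition. -/
def AgentPartition.parts (π : AgentPartition α) : Finset (Finset α) :=
  Finset.univ.image π.part

/-- Merge the coalitions of `π` according to a two-colouring of coalitions. -/
def mergeBy (π : AgentPartition α) (f : Finset α → Bool) : AgentPartition α where
  part i := Finset.univ.filter (fun j => f (π.part j) = f (π.part i))
  mem_part i := by simp
  part_eq_of_mem i j h := by
    have h' : f (π.part j) = f (π.part i) := by simpa using h
    simp [h']

theorem mergeBy_parts_card (π : AgentPartition α) (f : Finset α → Bool) :
    (mergeBy π f).parts.card ≤ 2 := by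
  have h : (mergeBy π f).parts ⊆ (Finset.univ : Finset Bool).image
      (fun b => Finset.univ.filter (fun j => f (π.part j) = b)) := by
    intro s hs
    obtain ⟨i, -, rfl⟩ := Finset.mem_image.1 hs
    exact Finset.mem_image.2 ⟨f (π.part i), Finset.mem_univ _, rfl⟩
  exact (Finset.card_le_card h).trans (Finset.card_image_le.trans (by simp))

/-- Sign correlation of a colouring at two points. -/
def corr {β : Type*} (f : β → Bool) (a b : β) : ℝ := if f b = f a then 1 else -1

theorem sum_corr {β : Type*} [DecidableEq β] [Fintype β] (a b : β) (hab : a ≠ b) :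
    ∑ f : β → Bool, corr f a b = 0 := by
  refine Finset.sum_involution (fun f _ => Function.update f a (!(f a))) ?_ ?_ ?_ ?_
  · intro f _
    simp only [corr, Function.update_self, Function.update_of_ne hab.symm]
    cases f a <;> cases f b <;> simp
  · intro f _ _ h
    have := congrFun h a
    simp at this
  · intro f _
    simp
  · intro f _
    simp

theorem part_eq_iff (π : AgentPartition α) (i j : α) :
    j ∈ π.part i ↔ π.part i = π.part j :=
  ⟨fun h => (π.part_eq_of_mem i j h).symm, fun h => h ▸ π.mem_part j⟩

theorem two_SW_mergeBy (v : α → α → ℝ) (π : AgentPartition α) (f : Finset α → Bool) :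
    2 * SW v (mergeBy π f) =
      ∑ i, ∑ j, (v i j + v i j * corr f (π.part i) (π.part j)) := by
  simp only [SW, mergeBy, Finset.mul_sum, Finset.sum_filter]
  refine Finset.sum_congr rfl fun i _ => Finset.sum_congr rfl fun j _ => ?_
  unfold corr
  split_ifs <;> ring

theorem sum_two_SW (v : α → α → ℝ) (π : AgentPartition α) :
    ∑ f : Finset α → Bool, 2 * SW v (mergeBy π f) =
      ∑ _f : Finset α → Bool, (SW v π + TV α v) := by
  simp only [two_SW_mergeBy]
  rw [Finset.sum_comm, Finset.sum_const, SW, TV, ← Finset.sum_add_distrib, Finset.smul_sum]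
  refine Finset.sum_congr rfl fun i _ => ?_
  rw [Finset.sum_comm]
  have : ∑ j ∈ π.part i, v i j = ∑ j, if j ∈ π.part i then v i j else 0 := by simp
  rw [this, ← Finset.sum_add_distrib, Finset.smul_sum]
  refine Finset.sum_congr rfl fun j _ => ?_
  rw [Finset.sum_add_distrib, ← Finset.mul_sum, Finset.sum_const]
  by_cases h : j ∈ π.part i
  · have h' := (part_eq_iff π i j).1 h
    rw [if_pos h, h']
    simp only [corr, if_true, Finset.sum_const, nsmul_eq_mul]
    ring
  · have h' := fun e => h ((part_eq_iff π i j).2 e)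
    rw [if_neg h, sum_corr _ _ h']
    simp

theorem exists_two_part_partition_doubling (v : α → α → ℝ)
    (hv : ∀ i, v i i = 0) (hn : 2 ≤ Fintype.card α) (π : AgentPartition α) :
    ∃ π₂ : AgentPartition α, π₂.parts.card ≤ 2 ∧
      SW v π + TV α v ≤ 2 * SW v π₂ := by
  obtain ⟨f, -, hf⟩ := Finset.exists_le_of_sum_le Finset.univ_nonempty (sum_two_SW v π).ge
  exact ⟨mergeBy π f, mergeBy_parts_card π f, hf⟩
end

section
/- Let (N, v) be a symmetric aversion-to-enemies game on n = |N| agents, i.e., v(i,j) ∈ {−n, 1} for all distinct i, j ∈ N. Then for every partition π of N there exists a partition π' of N with SW(π') ≥ SW(π) such that no coalition of π' contains two distinct agents i, j with v(i,j) = −n. -/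
variable {α : Type*} [DecidableEq α] [Fintype α]

/-- Isolate agent `a`. -/
def AgentPartition.isolate (π : AgentPartition α) (a : α) : AgentPartition α where
  part k := if k = a then {a} else (π.part k).erase a
  mem_part k := by
    by_cases h : k = a
    · simp [h]
    · simp [h, π.mem_part k]
  part_eq_of_mem k j hj := by
    by_cases h : k = a
    · subst h
      simp at hj
      simp [hj]
    · simp only [h, if_false, Finset.mem_erase] at hj
      simp [h, hj.1, π.part_eq_of_mem k j hj.2]

theorem AgentPartition.mem_symm (π : AgentPartition α) {i j : α} (h : j ∈ π.part i) :
    i ∈ π.part j := by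
  rw [π.part_eq_of_mem i j h]; exact π.mem_part i

theorem AgentPartition.mem_comm (π : AgentPartition α) (i j : α) :
    j ∈ π.part i ↔ i ∈ π.part j := ⟨π.mem_symm, π.mem_symm⟩

theorem SW_eq_ite (v : α → α → ℝ) (π : AgentPartition α) :
    SW v π = ∑ i, ∑ j, if j ∈ π.part i then v i j else 0 := by
  unfold SW
  refine Finset.sum_congr rfl fun i _ => ?_
  rw [Finset.sum_ite_mem, Finset.univ_inter]

theorem SW_isolate (v : α → α → ℝ) (hv : ∀ i, v i i = 0) (hsym : ∀ i j, v i j = v j i)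
    (π : AgentPartition α) (a : α) :
    SW v π = SW v (π.isolate a) + 2 * ∑ j, if j ∈ π.part a then v a j else 0 := by
  have key : ∀ k j, (if j ∈ π.part k then v k j else 0) =
      (if j ∈ (π.isolate a).part k then v k j else 0)
        + (if k = a then (if j ∈ π.part a then v a j else 0) else 0)
        + (if j = a then (if k ∈ π.part a then v a k else 0) else 0) := by
    intro k j
    by_cases hk : k = a
    · subst hk
      by_cases hj : j = k
      · subst hj
        simp [hv]
      · simp [AgentPartition.isolate, hj]
    · by_cases hj : j = a
      · subst hj
        simp [AgentPartition.isolate, hk, π.mem_comm k j, hsym k j]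
      · simp [AgentPartition.isolate, hk, hj]
  rw [SW_eq_ite, SW_eq_ite]
  rw [Finset.sum_congr rfl fun k _ => Finset.sum_congr rfl fun j _ => key k j]
  simp only [Finset.sum_add_distrib]
  rw [Finset.sum_comm (f := fun k j => if k = a then (if j ∈ π.part a then v a j else 0) else 0)]
  simp only [Finset.sum_ite_eq', Finset.mem_univ, if_true]
  ring

theorem utility_neg (v : α → α → ℝ) (hv : ∀ i, v i i = 0)
    (hav : ∀ i j : α, i ≠ j → v i j = -(Fintype.card α : ℝ) ∨ v i j = 1)
    (π : AgentPartition α) (a e : α) (he : e ∈ π.part a)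
    (hve : v a e = -(Fintype.card α : ℝ)) :
    (∑ j, if j ∈ π.part a then v a j else 0) < 0 := by
  have hle : ∀ j, (if j ∈ π.part a then v a j else 0) ≤
      1 - (if j = e then (Fintype.card α : ℝ) + 1 else 0) := by
    intro j
    by_cases hj : j = e
    · subst hj
      simp [he, hve]
    · have hn : (0 : ℝ) ≤ Fintype.card α := Nat.cast_nonneg _
      have h1 : v a j ≤ 1 := by
        by_cases h : a = j
        · subst h; rw [hv]; norm_num
        · rcases hav a j h with h | h <;> rw [h] <;> linarith
      simp only [hj, if_false]
      split_ifs <;> linarith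
  have := Finset.sum_le_sum (s := Finset.univ) fun j _ => hle j
  rw [Finset.sum_sub_distrib] at this
  simp only [Finset.sum_ite_eq', Finset.mem_univ, if_true, Finset.sum_const, Finset.card_univ,
    nsmul_eq_mul] at this
  linarith

theorem finite_agentPartition : Finite (AgentPartition α) := by
  apply Finite.of_injective (fun π : AgentPartition α => π.part)
  intro p q h
  cases p; cases q
  simpa using h

theorem exists_enemy_free_partition (v : α → α → ℝ)
    (hv : ∀ i, v i i = 0) (hsym : ∀ i j, v i j = v j i)
    (hav : ∀ i j : α, i ≠ j →
      v i j = -(Fintype.card α : ℝ) ∨ v i j = 1)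
    (π : AgentPartition α) :
    ∃ π' : AgentPartition α, SW v π ≤ SW v π' ∧
      ∀ i j : α, i ≠ j → j ∈ π'.part i →
        v i j ≠ -(Fintype.card α : ℝ) := by
  haveI := finite_agentPartition (α := α)
  haveI : Nonempty (AgentPartition α) := ⟨π⟩
  obtain ⟨q, hq⟩ := Finite.exists_max (SW v)
  refine ⟨q, hq π, fun i j _ hj hve => ?_⟩
  have h1 := SW_isolate v hv hsym q i
  have h2 := utility_neg v hv hav q i j hj hve
  have h3 := hq (q.isolate i)
  linarith
end

section
/- Let (N, v) be a symmetric aversion-to-enemies game on n = |N| agents, and let G' be the simple graph on vertex set N whose edges are the pairs {i,j} with v(i,j) = 1. If every clique of G' has at most t vertices (t ≥ 1), then every partition π of N satisfies SW(π) ≤ n·(t − 1); in particular the maximum social welfare is at most n·(t − 1). -/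
variable {α : Type*} [DecidableEq α] [Fintype α]

theorem sw_le_of_clique_bound (v : α → α → ℝ)
    (hv : ∀ i, v i i = 0) (hsym : ∀ i j, v i j = v j i)
    (hav : ∀ i j : α, i ≠ j →
      v i j = -(Fintype.card α : ℝ) ∨ v i j = 1)
    (G' : SimpleGraph α)
    (hG : ∀ i j, G'.Adj i j ↔ i ≠ j ∧ v i j = 1)
    (t : ℕ) (ht : 1 ≤ t)
    (hclique : ∀ s : Finset α, G'.IsClique (↑s : Set α) → s.card ≤ t)
    (π : AgentPartition α) :
    SW v π ≤ (Fintype.card α : ℝ) * ((t : ℝ) - 1) := by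
  classical
  have hmem : ∀ i j, j ∈ π.part i → i ∈ π.part j := fun i j h => by
    rw [π.part_eq_of_mem i j h]; exact π.mem_part i
  -- an agent is free when it has no enemy in its coalition
  let F : α → Prop := fun i => ∀ j ∈ π.part i, j ≠ i → v i j = 1
  have h1 : ∀ i, ∑ j ∈ π.part i, v i j ≤
      ∑ j, if (i ∈ π.part j ∧ F i ∧ i ≠ j) then (1 : ℝ) else 0 := by
    intro i
    by_cases hF : F i
    · rw [← Finset.sum_filter_add_sum_filter_not Finset.univ (fun j => j ∈ π.part i)]
      have hnn : 0 ≤ ∑ j ∈ Finset.univ.filter (fun j => ¬ j ∈ π.part i),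
          (if (i ∈ π.part j ∧ F i ∧ i ≠ j) then (1 : ℝ) else 0) :=
        Finset.sum_nonneg fun j _ => by split_ifs <;> norm_num
      have he : Finset.univ.filter (fun j => j ∈ π.part i) = π.part i := by ext; simp
      rw [he]
      have : ∑ j ∈ π.part i, v i j ≤ ∑ j ∈ π.part i,
          (if (i ∈ π.part j ∧ F i ∧ i ≠ j) then (1 : ℝ) else 0) := by
        refine Finset.sum_le_sum fun j hj => ?_
        by_cases hij : i = j
        · subst hij; simp [hv]
        · rw [if_pos ⟨hmem i j hj, hF, hij⟩, hF j hj (Ne.symm hij)]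
      linarith
    · refine le_trans ?_ (Finset.sum_nonneg fun j _ => by split_ifs <;> norm_num)
      have hF' : ∃ j ∈ π.part i, j ≠ i ∧ v i j ≠ 1 := by
        by_contra hcon
        push Not at hcon
        exact hF hcon
      obtain ⟨k, hk, hki, hvk⟩ := hF'
      have hvk' := (hav i k (Ne.symm hki)).resolve_right hvk
      rw [← Finset.add_sum_erase _ _ hk, hvk']
      have hle : ∑ j ∈ (π.part i).erase k, v i j ≤ ∑ j ∈ (π.part i).erase k, (1 : ℝ) := by
        refine Finset.sum_le_sum fun j _ => ?_
        by_cases hij : i = j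
        · subst hij; simp [hv]
        · rcases hav i j hij with h | h <;> rw [h]
          have : (0 : ℝ) ≤ Fintype.card α := Nat.cast_nonneg _
          linarith
      have hc : (((π.part i).erase k).card : ℝ) ≤ Fintype.card α := by
        exact_mod_cast Finset.card_le_univ _
      simp only [Finset.sum_const, nsmul_eq_mul, mul_one] at hle
      linarith
  have h2 : ∀ j, (∑ i, if (i ∈ π.part j ∧ F i ∧ i ≠ j) then (1 : ℝ) else 0) ≤ (t : ℝ) - 1 := by
    intro j
    rw [Finset.sum_boole]
    have hj : j ∉ Finset.univ.filter (fun i => i ∈ π.part j ∧ F i ∧ i ≠ j) := by simp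
    have hcl := hclique (insert j (Finset.univ.filter (fun i => i ∈ π.part j ∧ F i ∧ i ≠ j))) (by
      intro a ha b hb hab
      rw [hG]
      refine ⟨hab, ?_⟩
      simp only [Finset.coe_insert, Finset.coe_filter, Finset.mem_univ, true_and,
        Set.mem_insert_iff, Set.mem_ofPred_eq] at ha hb
      have ha' : a ∈ π.part j := by
        rcases ha with h | h
        · rw [h]; exact π.mem_part j
        · exact h.1
      have hb' : b ∈ π.part j := by
        rcases hb with h | h
        · rw [h]; exact π.mem_part j
        · exact h.1
      have hpa := π.part_eq_of_mem j a ha'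
      have hpb := π.part_eq_of_mem j b hb'
      rcases ha with h | h
      · rcases hb with h' | h'
        · exact absurd (h.trans h'.symm) hab
        · rw [hsym]
          exact h'.2.1 a (by rw [hpb]; exact ha') hab
      · exact h.2.1 b (by rw [hpa]; exact hb') (Ne.symm hab))
    rw [Finset.card_insert_of_notMem hj] at hcl
    have : ((Finset.univ.filter (fun i => i ∈ π.part j ∧ F i ∧ i ≠ j)).card : ℝ) + 1 ≤ t := by
      exact_mod_cast hcl
    linarith
  calc SW v π ≤ ∑ i, ∑ j, if (i ∈ π.part j ∧ F i ∧ i ≠ j) then (1 : ℝ) else 0 :=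
        Finset.sum_le_sum fun i _ => h1 i
    _ = ∑ j, ∑ i, if (i ∈ π.part j ∧ F i ∧ i ≠ j) then (1 : ℝ) else 0 := Finset.sum_comm
    _ ≤ ∑ _j : α, ((t : ℝ) - 1) := Finset.sum_le_sum fun j _ => h2 j
    _ = _ := by rw [Finset.sum_const, nsmul_eq_mul, Finset.card_univ]
end

section
/- Let (N, v) be a symmetric aversion-to-enemies game on n = |N| agents, and let G' be the simple graph on N whose edges are the pairs {i,j} with v(i,j) = 1. If G' is k-partite (i.e., N can be partitioned into k classes such that no edge of G' joins two agents of the same class), then every partition π of N satisfies SW(π) ≤ n·(k − 1). -/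
variable {α : Type*} [DecidableEq α] [Fintype α]

theorem coalition_le (v : α → α → ℝ)
    (hv : ∀ i, v i i = 0) (hle : ∀ i j, v i j ≤ 1)
    (k : ℕ) (f : α → Fin k)
    (hf : ∀ i j, i ≠ j → f i = f j → v i j = -(Fintype.card α : ℝ))
    (C : Finset α) :
    ∑ i ∈ C, ((∑ j ∈ C, v i j) - ((k : ℝ) - 1)) ≤ 0 := by
  classical
  set n : ℝ := (Fintype.card α : ℝ) with hn
  set P : α → Prop := fun i => ∃ j ∈ C, i ≠ j ∧ f i = f j with hP
  have hu : ∀ i ∈ C, ∑ j ∈ C, v i j ≤ (C.card : ℝ) - 1 - (n + 1) * (if P i then 1 else 0) := by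
    intro i hi
    rw [← Finset.add_sum_erase C _ hi, hv, zero_add]
    have hc : ((C.erase i).card : ℝ) = (C.card : ℝ) - 1 := by
      rw [← Finset.card_erase_add_one hi]; push_cast; ring
    split_ifs with h
    · obtain ⟨j, hj, hij, hfij⟩ := h
      have hj' : j ∈ C.erase i := Finset.mem_erase.2 ⟨hij.symm, hj⟩
      rw [← Finset.add_sum_erase _ _ hj', hf i j hij hfij]
      have h1 : ∑ l ∈ (C.erase i).erase j, v i l ≤ (((C.erase i).erase j).card : ℝ) := by
        have := Finset.sum_le_card_nsmul ((C.erase i).erase j) (fun l => v i l) 1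
          (fun l _ => hle i l)
        simpa using this
      have h2 : (((C.erase i).erase j).card : ℝ) + 1 = ((C.erase i).card : ℝ) := by
        rw [← Finset.card_erase_add_one hj']; push_cast; ring
      linarith
    · have := Finset.sum_le_card_nsmul (C.erase i) (fun l => v i l) 1 (fun l _ => hle i l)
      simp only [nsmul_eq_mul, mul_one] at this
      linarith
  have hA : (C.filter (fun i => ¬ P i)).card ≤ k := by
    have := Finset.card_le_card_of_injOn (s := C.filter (fun i => ¬ P i))
      (t := (Finset.univ : Finset (Fin k))) f (by intro i _; simp) (by
        intro i hi j hj hij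
        simp only [Finset.coe_filter, Set.mem_setOf_eq] at hi hj
        by_contra hne
        exact hi.2 ⟨j, hj.1, hne, hij⟩)
    simpa using this
  have hsplit := Finset.card_filter_add_card_filter_not (s := C) P
  have hB : (C.card : ℝ) - k ≤ ((C.filter P).card : ℝ) := by
    have : C.card ≤ (C.filter P).card + k := by omega
    have : (C.card : ℝ) ≤ (C.filter P).card + k := by exact_mod_cast this
    linarith
  have hB0 : (0 : ℝ) ≤ ((C.filter P).card : ℝ) := by positivity
  have hm : (C.card : ℝ) ≤ n := by rw [hn]; exact_mod_cast Finset.card_le_univ C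
  have hm0 : (0 : ℝ) ≤ C.card := by positivity
  have hsum := Finset.sum_le_sum hu
  rw [Finset.sum_sub_distrib, ← Finset.mul_sum, Finset.sum_boole] at hsum
  rw [Finset.sum_sub_distrib]
  simp only [Finset.sum_const, nsmul_eq_mul] at hsum ⊢
  have h3 : (C.card : ℝ) * ((C.card : ℝ) - k) ≤ C.card * ((C.filter P).card : ℝ) :=
    mul_le_mul_of_nonneg_left hB hm0
  have h4 : (C.card : ℝ) * ((C.filter P).card : ℝ) ≤ (n + 1) * ((C.filter P).card : ℝ) :=
    mul_le_mul_of_nonneg_right (by linarith) hB0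
  linarith

theorem sw_le_of_multipartite (v : α → α → ℝ)
    (hv : ∀ i, v i i = 0) (hsym : ∀ i j, v i j = v j i)
    (hav : ∀ i j : α, i ≠ j →
      v i j = -(Fintype.card α : ℝ) ∨ v i j = 1)
    (G' : SimpleGraph α)
    (hG : ∀ i j, G'.Adj i j ↔ i ≠ j ∧ v i j = 1)
    (k : ℕ) (f : α → Fin k)
    (hcolor : ∀ i j, G'.Adj i j → f i ≠ f j)
    (π : AgentPartition α) :
    SW v π ≤ (Fintype.card α : ℝ) * ((k : ℝ) - 1) := by
  have hle : ∀ i j, v i j ≤ 1 := by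
    intro i j
    by_cases h : i = j
    · subst h; rw [hv]; norm_num
    · rcases hav i j h with h | h
      · have : (0 : ℝ) ≤ (Fintype.card α : ℝ) := by positivity
        linarith
      · exact h.le
  have hf : ∀ i j, i ≠ j → f i = f j → v i j = -(Fintype.card α : ℝ) := by
    intro i j hij hfij
    rcases hav i j hij with h | h
    · exact h
    · exact absurd hfij (hcolor i j ((hG i j).2 ⟨hij, h⟩))
  have key : ∑ i, ((∑ j ∈ π.part i, v i j) - ((k : ℝ) - 1)) ≤ 0 := by
    rw [← Finset.sum_fiberwise Finset.univ π.part]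
    refine Finset.sum_nonpos fun C _ => ?_
    by_cases hC : ∃ i, π.part i = C
    · obtain ⟨i, rfl⟩ := hC
      have he : Finset.univ.filter (fun j => π.part j = π.part i) = π.part i := by
        ext j
        simp only [Finset.mem_filter, Finset.mem_univ, true_and]
        exact ⟨fun h => h ▸ π.mem_part j, π.part_eq_of_mem i j⟩
      rw [he]
      refine le_trans (le_of_eq ?_) (coalition_le v hv hle k f hf (π.part i))
      refine Finset.sum_congr rfl fun j hj => ?_
      rw [π.part_eq_of_mem i j hj]
    · push Not at hC
      rw [Finset.filter_eq_empty_iff.2 (fun i _ => hC i)]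
      simp
  rw [Finset.sum_sub_distrib] at key
  simp only [Finset.sum_const, nsmul_eq_mul, Finset.card_univ] at key
  unfold SW
  linarith
end

section
/- Let G = (V, E) be a finite simple graph and let v⁻ ≥ 1 be a real number. Define a symmetric additively separable hedonic game on the agent set N = V ∪ {z}, where z ∉ V, with symmetric valuations v(z, a) = 1 for every a ∈ V, and for distinct a, b ∈ V: v(a,b) = 0 if {a,b} ∈ E and v(a,b) = −v⁻ otherwise. Then the maximum social welfare over all partitions of N equals 2·ω(G), where ω(G) is the maximum number of vertices in a clique of G (with ω(G) = 0 if V = ∅); the maximum is attained by the partition whose only nonsingleton coalition is {z} ∪ C* for a maximum clique C* of G. -/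
variable {α : Type*} [DecidableEq α] [Fintype α]

theorem clique_bound_aux {V : Type*} [DecidableEq V] (G : SimpleGraph V)
    (w : V → V → ℝ) (hw0 : ∀ a, w a a = 0) (hwle : ∀ a b, w a b ≤ 0)
    (hn : ∀ a b, a ≠ b → ¬ G.Adj a b → w a b ≤ -1) (k : ℕ)
    (hk : ∀ s : Finset V, G.IsClique (↑s : Set V) → s.card ≤ k) :
    ∀ (n : ℕ) (S : Finset V), S.card = n →
      2 * (S.card : ℝ) + ∑ a ∈ S, ∑ b ∈ S, w a b ≤ 2 * (k : ℝ) := by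
  intro n
  induction n with
  | zero =>
    intro S hS
    have : S = ∅ := Finset.card_eq_zero.mp hS
    subst this
    simp
  | succ n ih =>
    intro S hS
    by_cases hc : G.IsClique (↑S : Set V)
    · have h1 : (S.card : ℝ) ≤ k := by exact_mod_cast hk S hc
      have h2 : ∑ a ∈ S, ∑ b ∈ S, w a b ≤ 0 :=
        Finset.sum_nonpos fun a _ => Finset.sum_nonpos fun b _ => hwle a b
      linarith
    · have : ∃ a ∈ S, ∃ b ∈ S, a ≠ b ∧ ¬ G.Adj a b := by
        by_contra hcon
        push Not at hcon
        exact hc fun a ha b hb hab => hcon a ha b hb hab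
      obtain ⟨a, ha, b, hb, hab, hnab⟩ := this
      have hb' : b ∈ S.erase a := Finset.mem_erase.mpr ⟨hab.symm, hb⟩
      have hcard : (S.erase a).card = n := by rw [Finset.card_erase_of_mem ha, hS]; rfl
      have h := ih (S.erase a) hcard
      have e1 : ∑ x ∈ S.erase a, w a x ≤ w a b := by
        rw [← Finset.add_sum_erase _ _ hb']
        have := Finset.sum_nonpos (s := (S.erase a).erase b) fun x _ => hwle a x
        linarith
      have e2 : ∑ x ∈ S.erase a, w x a ≤ w b a := by
        rw [← Finset.add_sum_erase _ _ hb']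
        have := Finset.sum_nonpos (s := (S.erase a).erase b) fun x _ => hwle x a
        linarith
      have e3 : ∑ x ∈ S, ∑ y ∈ S, w x y = (w a a + ∑ y ∈ S.erase a, w a y) +
          (∑ x ∈ S.erase a, w x a + ∑ x ∈ S.erase a, ∑ y ∈ S.erase a, w x y) := by
        rw [← Finset.add_sum_erase _ _ ha, ← Finset.add_sum_erase S (fun y => w a y) ha,
          ← Finset.sum_add_distrib]
        congr 1
        exact Finset.sum_congr rfl fun x _ => (Finset.add_sum_erase S (fun y => w x y) ha).symm
      have h3 := hn a b hab hnab
      have h4 := hn b a hab.symm fun h => hnab h.symm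
      rw [hcard] at h
      rw [e3, hw0, hS]
      push_cast
      linarith

theorem max_sw_eq_two_mul_max_clique
    (V : Type*) [Fintype V] [DecidableEq V] (G : SimpleGraph V)
    (vminus : ℝ) (hvm : 1 ≤ vminus)
    (v : Option V → Option V → ℝ)
    (hv0 : ∀ i, v i i = 0)
    (hsym : ∀ i j, v i j = v j i)
    (hz : ∀ a : V, v none (some a) = 1)
    (hadj : ∀ a b : V, a ≠ b → G.Adj a b → v (some a) (some b) = 0)
    (hnadj : ∀ a b : V, a ≠ b → ¬ G.Adj a b → v (some a) (some b) = -vminus)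
    (Cstar : Finset V) (hC : G.IsClique (↑Cstar : Set V))
    (hCmax : ∀ s : Finset V, G.IsClique (↑s : Set V) → s.card ≤ Cstar.card)
    (πstar : AgentPartition (Option V))
    (hπ : ∀ i : Option V,
      πstar.part i =
        if i ∈ insert none (Cstar.image some) then insert none (Cstar.image some)
        else {i}) :
    IsGreatest {x : ℝ | ∃ π : AgentPartition (Option V), SW v π = x}
      (2 * (Cstar.card : ℝ)) ∧
      SW v πstar = 2 * (Cstar.card : ℝ) := by
  have hw : ∀ a b : V, v (some a) (some b) ≤ 0 := by
    intro a b
    by_cases hab : a = b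
    · subst hab; rw [hv0]
    · by_cases h : G.Adj a b
      · rw [hadj a b hab h]
      · rw [hnadj a b hab h]; linarith
  have hz' : ∀ a : V, v (some a) none = 1 := fun a => by rw [hsym, hz]
  have key : ∀ π : AgentPartition (Option V), SW v π =
      (∑ a : V, if some a ∈ π.part none then (1 : ℝ) else 0) +
      ∑ a : V, ((if none ∈ π.part (some a) then (1 : ℝ) else 0) +
        ∑ b : V, if some b ∈ π.part (some a) then v (some a) (some b) else 0) := by
    intro π
    have h : ∀ i, ∑ j ∈ π.part i, v i j = ∑ j, if j ∈ π.part i then v i j else 0 := by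
      intro i
      rw [Finset.sum_ite_mem, Finset.univ_inter]
    unfold SW
    simp only [h, Fintype.sum_option, hv0, hz, hz', ite_self, zero_add]
  have hstar : SW v πstar = 2 * (Cstar.card : ℝ) := by
    rw [key]
    have h1 : ∀ a : V, (some a ∈ πstar.part none) ↔ a ∈ Cstar := by
      intro a; rw [hπ]; simp
    have h2 : ∀ a : V, (none ∈ πstar.part (some a)) ↔ a ∈ Cstar := by
      intro a; rw [hπ]; by_cases h : a ∈ Cstar <;> simp [h]
    have h3 : ∀ a b : V,
        (if some b ∈ πstar.part (some a) then v (some a) (some b) else 0) = 0 := by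
      intro a b
      by_cases hab : a = b
      · subst hab; simp [hv0]
      · rw [hπ]
        by_cases ha : a ∈ Cstar
        · by_cases hb : b ∈ Cstar
          · simp [hadj a b hab (hC ha hb hab)]
          · simp [ha, hb]
        · simp [ha, Ne.symm hab]
    simp only [h1, h2, h3]
    simp
    ring
  refine ⟨⟨⟨πstar, hstar⟩, ?_⟩, hstar⟩
  rintro x ⟨π, rfl⟩
  rw [key]
  let S : Finset V := Finset.univ.filter fun a => some a ∈ π.part none
  have hS : ∀ a, a ∈ S ↔ some a ∈ π.part none := fun a => by simp [S]
  have hb := clique_bound_aux G (fun a b => v (some a) (some b)) (fun a => hv0 _) hw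
    (fun a b hab h => by rw [hnadj a b hab h]; linarith) Cstar.card hCmax S.card S rfl
  have hpt : ∀ a : V, ((if none ∈ π.part (some a) then (1 : ℝ) else 0) +
      ∑ b : V, if some b ∈ π.part (some a) then v (some a) (some b) else 0) ≤
      if a ∈ S then 1 + ∑ b ∈ S, v (some a) (some b) else 0 := by
    intro a
    by_cases ha : a ∈ S
    · have e := π.part_eq_of_mem _ _ ((hS a).mp ha)
      simp only [e, ← hS, ha, π.mem_part none, if_true]
      rw [Finset.sum_ite_mem, Finset.univ_inter]
    · have hn : none ∉ π.part (some a) := by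
        intro h
        have e := π.part_eq_of_mem _ _ h
        exact ha ((hS a).mpr (e ▸ π.mem_part (some a)))
      simp only [hn, ha, if_false, zero_add]
      refine Finset.sum_nonpos fun b _ => ?_
      split_ifs
      · exact hw a b
      · exact le_rfl
  have hsum := Finset.sum_le_sum (s := Finset.univ) fun a _ => hpt a
  simp only [Finset.sum_ite_mem, Finset.univ_inter, Finset.sum_add_distrib] at hsum
  simp only [Finset.sum_const, nsmul_eq_mul, mul_one] at hsum
  have h1 : (∑ a : V, if some a ∈ π.part none then (1 : ℝ) else 0) = S.card := by
    simp [S]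
  rw [h1, Finset.sum_add_distrib]
  linarith
end
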